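/- arXiv:2110.01332 — 4 statements merged into one kernel-verified Lean document; each statement's English description precedes it below -/
import Mathlib

section
/- For every f ∈ L²(μ) such that u·f, conj(w)·(T f) and u·(T†(T f)) are μ-integrable, one has the first Penrose identity T(T†(T f)) = T f μ-almost everywhere; explicitly, w·μ[u·( χ_S·(e_u·e_w)⁻¹·conj(u)·μ[conj(w)·(w·μ[u·f|𝒜])|𝒜] )|𝒜] = w·μ[u·f|𝒜] μ-a.e. -/
open MeasureTheory

/-- A nonnegative function vanishes a.e. where its conditional expectation vanishes. -/
theorem WCT_aux_zero {X : Type*} {m0 : MeasurableSpace X} (μ : Measure X)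
    (m : MeasurableSpace X) (hm : m ≤ m0) [SigmaFinite (μ.trim hm)]
    (v : X → ℂ) (hv2 : Integrable (fun x => ‖v x‖ ^ 2) μ) :
    ∀ᵐ x ∂μ, (μ[fun x => ‖v x‖ ^ 2|m]) x = 0 → v x = 0 := by
  have hs : MeasurableSet[m] {x | (μ[fun x => ‖v x‖ ^ 2|m]) x = 0} :=
    (stronglyMeasurable_condExp (m := m)).measurable (measurableSet_singleton (0 : ℝ))
  have hi := setIntegral_condExp hm hv2 hs
  rw [setIntegral_congr_fun (g := fun _ => (0 : ℝ)) (hm _ hs) (fun x hx => hx)] at hi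
  rw [integral_zero, eq_comm, setIntegral_eq_zero_iff_of_nonneg_ae
    (Filter.Eventually.of_forall fun x => by positivity) hv2.integrableOn] at hi
  have := (ae_restrict_iff' (hm _ hs)).1 hi
  filter_upwards [this] with x hx h0
  simpa using hx h0

/-- First Penrose identity for the WCT operator: `T (T† (T f)) = T f` μ-a.e. -/
theorem WCT_penrose_one
    {X : Type*} {m0 : MeasurableSpace X} (μ : Measure X) [SigmaFinite μ]
    (m : MeasurableSpace X) (hm : m ≤ m0) [SigmaFinite (μ.trim hm)]
    (u w : X → ℂ) (hu : Measurable u) (hw : Measurable w)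
    (hu2 : Integrable (fun x => ‖u x‖ ^ 2) μ)
    (hw2 : Integrable (fun x => ‖w x‖ ^ 2) μ)
    (eu ew : X → ℝ)
    (heu : eu = μ[fun x => ‖u x‖ ^ 2|m]) (hew : ew = μ[fun x => ‖w x‖ ^ 2|m])
    (T Td : (X → ℂ) → (X → ℂ))
    (hT : ∀ f, T f = fun x => w x * (μ[fun y => u y * f y|m]) x)
    (hTd : ∀ f, Td f = fun x =>
      (({x | eu x ≠ 0 ∧ ew x ≠ 0}.indicator (fun y => (eu y * ew y)⁻¹) x : ℝ) : ℂ) *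
        (starRingEnd ℂ) (u x) * (μ[fun y => (starRingEnd ℂ) (w y) * f y|m]) x)
    (f : X → ℂ) (hf : MemLp f 2 μ)
    (h1 : Integrable (fun x => u x * f x) μ)
    (h2 : Integrable (fun x => (starRingEnd ℂ) (w x) * T f x) μ)
    (h3 : Integrable (fun x => u x * Td (T f) x) μ) :
    ∀ᵐ x ∂μ, T (Td (T f)) x = T f x := by
  have zu := WCT_aux_zero μ m hm u hu2
  have zw := WCT_aux_zero μ m hm w hw2
  rw [← heu] at zu
  rw [← hew] at zw
  have meu : StronglyMeasurable[m] eu := heu ▸ stronglyMeasurable_condExp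
  have mew : StronglyMeasurable[m] ew := hew ▸ stronglyMeasurable_condExp
  have hsu : MeasurableSet[m] {x | eu x = 0} := meu.measurable (measurableSet_singleton (0 : ℝ))
  have hsw : MeasurableSet[m] {x | ew x = 0} := mew.measurable (measurableSet_singleton (0 : ℝ))
  have hS : MeasurableSet[m] {x | eu x ≠ 0 ∧ ew x ≠ 0} := hsu.compl.inter hsw.compl
  have zg : ∀ᵐ x ∂μ, eu x = 0 → (μ[fun y => u y * f y|m]) x = 0 := by
    have := condExp_ae_eq_restrict_zero (μ := μ) (f := fun y => u y * f y) hsu (by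
      refine (ae_restrict_iff' (hm _ hsu)).2 ?_
      filter_upwards [zu] with x hx h0
      simp [hx h0])
    exact (ae_restrict_iff' (hm _ hsu)).1 this
  have e2 : (fun x => (starRingEnd ℂ) (w x) * T f x) =
      (fun x => ‖w x‖ ^ 2) • (μ[fun y => u y * f y|m]) := by
    ext x
    simp only [hT, Pi.smul_apply', Complex.real_smul, Complex.ofReal_pow]
    rw [← mul_assoc, Complex.conj_mul']
  have p2 := condExp_smul_of_aestronglyMeasurable_right (m := m) hw2 (e2 ▸ h2)
    stronglyMeasurable_condExp.aestronglyMeasurable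
  rw [← e2, ← hew] at p2
  have e3 : (fun x => u x * Td (T f) x) =
      (fun x => ‖u x‖ ^ 2) • (fun x =>
        (({x | eu x ≠ 0 ∧ ew x ≠ 0}.indicator (fun y => (eu y * ew y)⁻¹) x : ℝ) : ℂ) *
        (μ[fun y => (starRingEnd ℂ) (w y) * T f y|m]) x) := by
    ext x
    simp only [hTd, Pi.smul_apply', Complex.real_smul, Complex.ofReal_pow]
    rw [← Complex.conj_mul']
    ring
  have mk : StronglyMeasurable[m] (fun x =>
        (({x | eu x ≠ 0 ∧ ew x ≠ 0}.indicator (fun y => (eu y * ew y)⁻¹) x : ℝ) : ℂ) *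
        (μ[fun y => (starRingEnd ℂ) (w y) * T f y|m]) x) := by
    refine StronglyMeasurable.mul ?_ stronglyMeasurable_condExp
    refine Complex.continuous_ofReal.comp_stronglyMeasurable ?_
    exact ((meu.measurable.mul mew.measurable).inv.stronglyMeasurable).indicator hS
  have p3 := condExp_smul_of_aestronglyMeasurable_right (m := m) hu2 (e3 ▸ h3)
    mk.aestronglyMeasurable
  rw [← e3, ← heu] at p3
  filter_upwards [zg, zw, p2, p3] with x hg hwx q2 q3
  rw [hT (Td (T f))]
  simp only
  rw [q3]
  simp only [Pi.smul_apply', Complex.real_smul] at q2 ⊢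
  rw [q2, hT f]
  by_cases a : eu x = 0
  · simp [hg a]
  by_cases b : ew x = 0
  · simp [hwx b]
  rw [Set.indicator_of_mem (show x ∈ {x | eu x ≠ 0 ∧ ew x ≠ 0} from ⟨a, b⟩)]
  have a' : (eu x : ℂ) ≠ 0 := by exact_mod_cast a
  have b' : (ew x : ℂ) ≠ 0 := by exact_mod_cast b
  push_cast
  field_simp
end

section
/- For every f ∈ L²(μ) such that conj(w)·f, u·(T† f) and conj(w)·(T(T† f)) are μ-integrable, one has the second Penrose identity T†(T(T† f)) = T† f μ-almost everywhere. -/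
open MeasureTheory

lemma WCT_pull_out {X : Type*} {m0 : MeasurableSpace X} (μ : Measure X)
    (m : MeasurableSpace X) (hm : m ≤ m0) [SigmaFinite (μ.trim hm)]
    (g : X → ℝ) (h : X → ℂ) (hh : StronglyMeasurable[m] h) (hg : Integrable g μ)
    (hgh : Integrable (fun x => g x • h x) μ) :
    μ[fun x => g x • h x|m] =ᵐ[μ] fun x => (μ[g|m]) x • h x :=
  condExp_bilin_of_stronglyMeasurable_right (ContinuousLinearMap.lsmul ℝ ℝ) hh hgh hg

/-- Second Penrose identity for the WCT operator: `T† (T (T† f)) = T† f` μ-a.e. -/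
theorem WCT_penrose_two
    {X : Type*} {m0 : MeasurableSpace X} (μ : Measure X) [SigmaFinite μ]
    (m : MeasurableSpace X) (hm : m ≤ m0) [SigmaFinite (μ.trim hm)]
    (u w : X → ℂ) (hu : Measurable u) (hw : Measurable w)
    (hu2 : Integrable (fun x => ‖u x‖ ^ 2) μ)
    (hw2 : Integrable (fun x => ‖w x‖ ^ 2) μ)
    (eu ew : X → ℝ)
    (heu : eu = μ[fun x => ‖u x‖ ^ 2|m]) (hew : ew = μ[fun x => ‖w x‖ ^ 2|m])
    (T Td : (X → ℂ) → (X → ℂ))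
    (hT : ∀ f, T f = fun x => w x * (μ[fun y => u y * f y|m]) x)
    (hTd : ∀ f, Td f = fun x =>
      (({x | eu x ≠ 0 ∧ ew x ≠ 0}.indicator (fun y => (eu y * ew y)⁻¹) x : ℝ) : ℂ) *
        (starRingEnd ℂ) (u x) * (μ[fun y => (starRingEnd ℂ) (w y) * f y|m]) x)
    (f : X → ℂ) (hf : MemLp f 2 μ)
    (h1 : Integrable (fun x => (starRingEnd ℂ) (w x) * f x) μ)
    (h2 : Integrable (fun x => u x * Td f x) μ)
    (h3 : Integrable (fun x => (starRingEnd ℂ) (w x) * T (Td f) x) μ) :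
    ∀ᵐ x ∂μ, Td (T (Td f)) x = Td f x := by
  set k : X → ℝ := {x | eu x ≠ 0 ∧ ew x ≠ 0}.indicator (fun y => (eu y * ew y)⁻¹) with hk
  have meu : StronglyMeasurable[m] eu := heu ▸ stronglyMeasurable_condExp
  have mew : StronglyMeasurable[m] ew := hew ▸ stronglyMeasurable_condExp
  have mk : StronglyMeasurable[m] k := by
    have : k = fun y => (eu y * ew y)⁻¹ := by
      funext y
      by_cases h : eu y ≠ 0 ∧ ew y ≠ 0
      · simp [hk, Set.indicator, h]
      · rw [hk, Set.indicator_of_notMem (by simpa using h)]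
        rw [not_and_or, not_not, not_not] at h
        rcases h with h | h <;> simp [h]
    rw [this]
    exact (meu.measurable.mul mew.measurable).inv.stronglyMeasurable
  have kk : ∀ x, (k x * ew x * (eu x * k x)) = k x := by
    intro x
    by_cases h : eu x ≠ 0 ∧ ew x ≠ 0
    · have : k x = (eu x * ew x)⁻¹ := by simp [hk, Set.indicator, h]
      rw [this]
      obtain ⟨h, h'⟩ := h
      field_simp
    · have : k x = 0 := by
        rw [hk, Set.indicator_of_notMem (by simpa using h)]
      simp [this]
  set G : X → ℂ := μ[fun y => (starRingEnd ℂ) (w y) * f y|m] with hG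
  have mG : StronglyMeasurable[m] G := stronglyMeasurable_condExp
  have nz : ∀ z : ℂ, z * (starRingEnd ℂ) z = ((‖z‖ ^ 2 : ℝ) : ℂ) := by
    intro z; rw [Complex.mul_conj']; push_cast; rfl
  have e1 : (fun x => u x * Td f x) = fun x => (‖u x‖ ^ 2) • ((k x : ℂ) * G x) := by
    funext x
    rw [hTd f, Complex.real_smul, ← nz]
    ring
  set H : X → ℂ := μ[fun x => u x * Td f x|m] with hH
  have mH : StronglyMeasurable[m] H := stronglyMeasurable_condExp
  have e2 : (fun x => (starRingEnd ℂ) (w x) * T (Td f) x) = fun x => (‖w x‖ ^ 2) • H x := by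
    funext x
    rw [hT, Complex.real_smul, ← nz]
    ring
  have mkG : StronglyMeasurable[m] (fun x => (k x : ℂ) * G x) :=
    (Complex.continuous_ofReal.comp_stronglyMeasurable mk).mul mG
  have p1 := WCT_pull_out μ m hm _ _ mkG hu2 (e1 ▸ h2)
  have p2 := WCT_pull_out μ m hm _ _ mH hw2 (e2 ▸ h3)
  rw [← e1, ← heu] at p1
  rw [← e2, ← hew] at p2
  filter_upwards [p1, p2] with x q1 q2
  have q1 : H x = eu x • ((k x : ℂ) * G x) := q1
  have a1 := congrFun (hTd (T (Td f))) x
  have a2 := congrFun (hTd f) x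
  rw [a1, a2, q2, q1]
  simp only [Complex.real_smul]
  have := congrArg (fun r : ℝ => (r : ℂ)) (kk x)
  push_cast at this
  change (k x : ℂ) * _ * _ = (k x : ℂ) * _ * G x
  linear_combination ((starRingEnd ℂ) (u x) * G x) * this
end

section
/- Let f, g ∈ L²(μ) be such that u·f and conj(w)·g are μ-integrable and both T f = w·μ[u·f|𝒜] and T* g = conj(u)·μ[conj(w)·g|𝒜] belong to L²(μ). Then the formal adjoint relation holds: ∫ (w·μ[u·f|𝒜])·conj(g) dμ = ∫ f·conj(conj(u)·μ[conj(w)·g|𝒜]) dμ. -/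
open MeasureTheory

/-- Formal adjoint relation: `⟨T f, g⟩ = ⟨f, T* g⟩` where `T f = w·μ[u·f|𝒜]` and
`T* g = conj(u)·μ[conj(w)·g|𝒜]`. -/
theorem WCT_adjoint_relation
    {X : Type*} {m0 : MeasurableSpace X} (μ : Measure X) [SigmaFinite μ]
    (m : MeasurableSpace X) (hm : m ≤ m0) [SigmaFinite (μ.trim hm)]
    (u w : X → ℂ) (hu : Measurable u) (hw : Measurable w)
    (hu2 : Integrable (fun x => ‖u x‖ ^ 2) μ)
    (hw2 : Integrable (fun x => ‖w x‖ ^ 2) μ)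
    (f g : X → ℂ) (hf : MemLp f 2 μ) (hg : MemLp g 2 μ)
    (huf : Integrable (fun x => u x * f x) μ)
    (hwg : Integrable (fun x => (starRingEnd ℂ) (w x) * g x) μ)
    (hTf : MemLp (fun x => w x * (μ[fun y => u y * f y|m]) x) 2 μ)
    (hTg : MemLp (fun x =>
      (starRingEnd ℂ) (u x) * (μ[fun y => (starRingEnd ℂ) (w y) * g y|m]) x) 2 μ) :
    ∫ x, (w x * (μ[fun y => u y * f y|m]) x) * (starRingEnd ℂ) (g x) ∂μ =
      ∫ x, f x * (starRingEnd ℂ)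
        ((starRingEnd ℂ) (u x) * (μ[fun y => (starRingEnd ℂ) (w y) * g y|m]) x) ∂μ := by
  set a : X → ℂ := fun y => u y * f y with ha
  set b : X → ℂ := fun y => (starRingEnd ℂ) (w y) * g y with hb
  set c : X → ℂ := fun y => (starRingEnd ℂ) (b y) with hc
  have hci : Integrable c μ :=
    (Complex.conjCLE : ℂ ≃L[ℝ] ℂ).toContinuousLinearMap.integrable_comp hwg
  have hbc : ∀ᵐ x ∂μ, (starRingEnd ℂ) ((μ[b|m]) x) = (μ[c|m]) x := by
    have h := ContinuousLinearMap.comp_condExp_comm (m := m) hwg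
      (Complex.conjCLE : ℂ ≃L[ℝ] ℂ).toContinuousLinearMap
    filter_upwards [h] with x hx
    exact hx
  have hgc : MemLp (fun x => (starRingEnd ℂ) (g x)) 2 μ := hg.star
  have hTgc : MemLp (fun x => (starRingEnd ℂ) ((starRingEnd ℂ) (u x) * (μ[b|m]) x)) 2 μ :=
    hTg.star
  have i1 : Integrable (fun x => (w x * (μ[a|m]) x) * (starRingEnd ℂ) (g x)) μ :=
    hTf.integrable_mul hgc
  have i2 : Integrable (fun x => f x * (starRingEnd ℂ) ((starRingEnd ℂ) (u x) * (μ[b|m]) x)) μ :=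
    hf.integrable_mul hTgc
  have e1 : (fun x => (w x * (μ[a|m]) x) * (starRingEnd ℂ) (g x)) =
      fun x => ContinuousLinearMap.mul ℝ ℂ ((μ[a|m]) x) (c x) := by
    funext x
    simp [hc, hb]
    ring
  have e2 : (fun x => f x * (starRingEnd ℂ) ((starRingEnd ℂ) (u x) * (μ[b|m]) x)) =ᵐ[μ]
      fun x => ContinuousLinearMap.mul ℝ ℂ (a x) ((μ[c|m]) x) := by
    filter_upwards [hbc] with x hx
    simp [ha, ← hx]
    ring
  rw [e1] at i1
  have i2' := i2.congr e2
  rw [e1, integral_congr_ae e2, ← integral_condExp hm, ← integral_condExp (m := m) hm (f := fun x => ContinuousLinearMap.mul ℝ ℂ (a x) ((μ[c|m]) x))]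
  refine integral_congr_ae ?_
  exact (condExp_bilin_of_stronglyMeasurable_left _ stronglyMeasurable_condExp i1 hci).trans
    (condExp_bilin_of_stronglyMeasurable_right _ stronglyMeasurable_condExp i2' huf).symm
end

section
/- Let λ > 0 and set t_λ = (e_u·e_w + λ)⁻¹ and P_λ f = λ⁻¹·f − (e_w·conj(u))/(λ·(e_w·e_u + λ))·μ[u·f|𝒜]. Then for every f ∈ L²(μ) such that u·f and u·(P_λ f) are μ-integrable, one has T(P_λ f) = t_λ·(T f) μ-almost everywhere, i.e. w·μ[u·(P_λ f)|𝒜] = t_λ·w·μ[u·f|𝒜] μ-a.e. -/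
open MeasureTheory

/-- For `λ > 0`, `T ∘ P_λ = M_{t_λ} ∘ T` a.e., where `t_λ = (e_u·e_w + λ)⁻¹` and
`P_λ f = λ⁻¹·f − (e_w·conj(u))/(λ·(e_w·e_u + λ))·μ[u·f|𝒜]`. -/
theorem WCT_T_comp_P_lambda
    {X : Type*} {m0 : MeasurableSpace X} (μ : Measure X) [SigmaFinite μ]
    (m : MeasurableSpace X) (hm : m ≤ m0) [SigmaFinite (μ.trim hm)]
    (u w : X → ℂ) (hu : Measurable u) (hw : Measurable w)
    (hu2 : Integrable (fun x => ‖u x‖ ^ 2) μ)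
    (hw2 : Integrable (fun x => ‖w x‖ ^ 2) μ)
    (eu ew : X → ℝ)
    (heu : eu = μ[fun x => ‖u x‖ ^ 2|m]) (hew : ew = μ[fun x => ‖w x‖ ^ 2|m])
    (lam : ℝ) (hlam : 0 < lam)
    (tlam : X → ℝ) (htlam : tlam = fun x => (eu x * ew x + lam)⁻¹)
    (Plam : (X → ℂ) → (X → ℂ))
    (hP : ∀ f, Plam f = fun x => (lam⁻¹ : ℝ) * f x -
      ((ew x / (lam * (ew x * eu x + lam)) : ℝ) : ℂ) * (starRingEnd ℂ) (u x) *
        (μ[fun y => u y * f y|m]) x)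
    (f : X → ℂ) (hf : MemLp f 2 μ)
    (huf : Integrable (fun x => u x * f x) μ)
    (huPf : Integrable (fun x => u x * Plam f x) μ) :
    ∀ᵐ x ∂μ, w x * (μ[fun y => u y * Plam f y|m]) x =
      (tlam x : ℂ) * w x * (μ[fun y => u y * f y|m]) x := by
  set E : X → ℂ := μ[fun y => u y * f y|m] with hE
  have hEm : StronglyMeasurable[m] E := stronglyMeasurable_condExp
  have heum : StronglyMeasurable[m] eu := heu ▸ stronglyMeasurable_condExp
  have hewm : StronglyMeasurable[m] ew := hew ▸ stronglyMeasurable_condExp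
  have hcm : Measurable[m] (fun x => ew x / (lam * (ew x * eu x + lam))) :=
    hewm.measurable.div (((hewm.measurable.mul heum.measurable).add_const lam).const_mul lam)
  set G : X → ℂ := fun x => ((ew x / (lam * (ew x * eu x + lam)) : ℝ) : ℂ) * E x with hG
  have hGm : StronglyMeasurable[m] G :=
    ((Complex.measurable_ofReal.comp hcm).mul hEm.measurable).stronglyMeasurable
  have hdec : (fun y => u y * Plam f y) =
      (lam⁻¹ : ℝ) • (fun y => u y * f y) - fun y => (‖u y‖ ^ 2 : ℝ) • G y := by
    funext y
    have h1 : u y * (starRingEnd ℂ) (u y) = ((‖u y‖ ^ 2 : ℝ) : ℂ) := by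
      rw [Complex.mul_conj, Complex.normSq_eq_norm_sq]
    simp only [hP, Pi.sub_apply, Pi.smul_apply, Complex.real_smul, hG, ← h1]
    ring
  have hint1 : Integrable ((lam⁻¹ : ℝ) • (fun y => u y * f y)) μ := huf.smul _
  have hint2 : Integrable (fun y => (‖u y‖ ^ 2 : ℝ) • G y) μ := by
    have h := hint1.sub huPf
    rw [hdec, sub_sub_cancel] at h
    exact h
  have hpull : μ[fun y => (‖u y‖ ^ 2 : ℝ) • G y|m] =ᵐ[μ] fun x => eu x • G x := by
    rw [heu]
    exact condExp_bilin_of_stronglyMeasurable_left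
      (ContinuousLinearMap.lsmul ℝ ℝ : ℝ →L[ℝ] ℂ →L[ℝ] ℂ).flip hGm hint2 hu2
  have heu0 : 0 ≤ᵐ[μ] eu := heu ▸ condExp_nonneg (ae_of_all _ fun x => by positivity)
  have hew0 : 0 ≤ᵐ[μ] ew := hew ▸ condExp_nonneg (ae_of_all _ fun x => by positivity)
  rw [hdec]
  filter_upwards [condExp_sub hint1 hint2 m, condExp_smul (μ := μ) (lam⁻¹ : ℝ)
    (fun y => u y * f y) m, hpull, heu0, hew0] with x h1 h2 h3 h4 h5
  have h4' : 0 ≤ eu x := h4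
  have h5' : 0 ≤ ew x := h5
  rw [h1, Pi.sub_apply, h2, h3, Pi.smul_apply, ← hE, htlam]
  have hpos : ew x * eu x + lam ≠ 0 := by positivity
  have key : lam⁻¹ - eu x * (ew x / (lam * (ew x * eu x + lam))) = (eu x * ew x + lam)⁻¹ := by
    rw [mul_comm (eu x) (ew x)]
    field_simp
    ring
  simp only [Complex.real_smul, hG]
  rw [← key]
  push_cast
  ring
end
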